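/- arXiv:2501.08412 — 2 statements merged into one kernel-verified Lean document; each statement's English description precedes it below -/
import Mathlib

section
/- (Lemma 2.2(ii), concrete form.) Let W ⊆ ℂ be a bounded open set and let g : ℂ → ℂ be smooth with tsupport g compact and contained in W. Then the following are equivalent: (i) there is a compact set K ⊆ W such that Tg(λ) = 0 for all λ ∈ ℂ \ K; (ii) there is a smooth function h : ℂ → ℂ with tsupport h compact and contained in W such that ∂̄h = g. -/
open MeasureTheory

/-- The Wirtinger derivative `∂̄f(z) = (1/2)·(∂ₓf(z) + i·∂_yf(z))`. -/
noncomputable def dbar (f : ℂ → ℂ) (z : ℂ) : ℂ :=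
  (1 / 2) * (fderiv ℝ f z 1 + Complex.I * fderiv ℝ f z Complex.I)

/-- The Cauchy transform `(Tg)(z) = (1/π) ∫_ℂ g(μ)/(z - μ) dA(μ)` (the integrand is `0`
at `μ = z` by the division-by-zero convention). -/
noncomputable def cauchyT (g : ℂ → ℂ) (z : ℂ) : ℂ :=
  (1 / (Real.pi : ℂ)) * ∫ μ : ℂ, g μ / (z - μ)


open Set

theorem aux_locInt : LocallyIntegrable (fun w : ℂ => w⁻¹) := by
  rw [locallyIntegrable_iff]
  intro K hK
  obtain ⟨R, hR⟩ := hK.isBounded.subset_ball (0 : ℂ)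
  refine IntegrableOn.mono_set ?_ hR
  have h1 : IntegrableOn (fun x : ℂ => ‖x‖⁻¹) (Metric.ball (0 : ℂ) R) := by
    refine (integrableOn_fun_norm_addHaar (volume : Measure ℂ) (f := fun y : ℝ => y⁻¹)).2 ?_
    have : IntegrableOn (fun _ : ℝ => (1 : ℝ)) (Ioo 0 R) := by
      simp
    refine this.congr_fun ?_ measurableSet_Ioo
    intro y hy
    have : y ≠ 0 := hy.1.ne'
    simp [Complex.finrank_real_complex, this]
  refine Integrable.mono' h1 (by fun_prop) ?_
  filter_upwards with x
  simp

theorem aux_conv (g : ℂ → ℂ) (z : ℂ) :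
    cauchyT g z = (1 / (Real.pi : ℂ)) *
      (convolution (fun w : ℂ => w⁻¹) g (ContinuousLinearMap.mul ℝ ℂ) volume) z := by
  rw [cauchyT, convolution_eq_swap]
  congr 1
  refine integral_congr_ae ?_
  filter_upwards with t
  simp [div_eq_mul_inv, mul_comm]

theorem aux_conv' (g : ℂ → ℂ) (z : ℂ) :
    cauchyT g z = (1 / (Real.pi : ℂ)) * ∫ w : ℂ, w⁻¹ * g (z - w) := by
  rw [aux_conv, convolution_def]
  simp

theorem aux_smooth (g : ℂ → ℂ) (hg : ContDiff ℝ (⊤ : ℕ∞) g) (hgc : HasCompactSupport g) :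
    ContDiff ℝ (⊤ : ℕ∞) (cauchyT g) := by
  have : cauchyT g = fun z => (1 / (Real.pi : ℂ)) *
      (convolution (fun w : ℂ => w⁻¹) g (ContinuousLinearMap.mul ℝ ℂ) volume) z :=
    funext (aux_conv g)
  rw [this]
  exact contDiff_const.mul (hgc.contDiff_convolution_right _ aux_locInt hg)

theorem aux_fderiv (g : ℂ → ℂ) (hg : ContDiff ℝ (⊤ : ℕ∞) g) (hgc : HasCompactSupport g)
    (z v : ℂ) : fderiv ℝ (cauchyT g) z v = cauchyT (fun w => fderiv ℝ g w v) z := by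
  have h0 : cauchyT g = fun z => (1 / (Real.pi : ℂ)) *
      (convolution (fun w : ℂ => w⁻¹) g (ContinuousLinearMap.mul ℝ ℂ) volume) z :=
    funext (aux_conv g)
  have h1 : ContDiff ℝ 1 g := hg.of_le (by exact_mod_cast le_top)
  have h2 := hgc.hasFDerivAt_convolution_right (ContinuousLinearMap.mul ℝ ℂ) aux_locInt h1 z
  rw [h0, (h2.const_mul (1 / (Real.pi : ℂ))).fderiv, aux_conv,
    ← convolution_precompR_apply _ aux_locInt (hgc.fderiv ℝ) (h1.continuous_fderiv one_ne_zero)]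
  rfl

theorem aux_dbar_T (g : ℂ → ℂ) (hg : ContDiff ℝ (⊤ : ℕ∞) g) (hgc : HasCompactSupport g)
    (z : ℂ) : dbar (cauchyT g) z = cauchyT (dbar g) z := by
  have h1 : ContDiff ℝ 1 g := hg.of_le (by exact_mod_cast le_top)
  have hint : ∀ v : ℂ, Integrable (fun w : ℂ => w⁻¹ * fderiv ℝ g (z - w) v) := by
    intro v
    have hc : HasCompactSupport (fun w => fderiv ℝ g w v) := hgc.fderiv_apply ℝ v
    exact hc.convolutionExists_right (ContinuousLinearMap.mul ℝ ℂ) aux_locInt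
      ((h1.continuous_fderiv one_ne_zero).clm_apply continuous_const) z
  rw [dbar, aux_fderiv g hg hgc, aux_fderiv g hg hgc, aux_conv', aux_conv', aux_conv']
  have : ∀ w : ℂ, w⁻¹ * dbar g (z - w) = (1 / 2) * (w⁻¹ * fderiv ℝ g (z - w) 1
      + Complex.I * (w⁻¹ * fderiv ℝ g (z - w) Complex.I)) := by
    intro w; rw [dbar]; ring
  simp_rw [this]
  rw [integral_const_mul, integral_add (hint _) ((hint _).const_mul _), integral_const_mul]
  ring

theorem aux_lin (L : ℂ →L[ℝ] ℂ) (v : ℂ) :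
    L v + Complex.I * L (Complex.I * v) =
      (L 1 + Complex.I * L Complex.I) * (starRingEnd ℂ) v := by
  have h : ∀ a b : ℝ, L (a + b * Complex.I) = a * L 1 + b * L Complex.I := by
    intro a b
    have : (a + b * Complex.I : ℂ) = a • (1 : ℂ) + b • Complex.I := by simp
    rw [this, map_add, map_smul, map_smul]; simp
  have h1 := h v.re v.im
  have h2 := h (-v.im) v.re
  have e2 : ((-v.im : ℝ) + v.re * Complex.I : ℂ) = Complex.I * v := by
    apply Complex.ext <;> simp
  rw [Complex.re_add_im] at h1
  rw [e2] at h2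
  rw [h1, h2]
  have : (starRingEnd ℂ) v = v.re - v.im * Complex.I := by
    apply Complex.ext <;> simp
  rw [this]
  push_cast
  linear_combination (v.im * L Complex.I) * Complex.I_mul_I

theorem aux_T_dbar (h : ℂ → ℂ) (hh : ContDiff ℝ (⊤ : ℕ∞) h) (hc : HasCompactSupport h)
    (z : ℂ) : cauchyT (dbar h) z = h z := by
  have h1 : ContDiff ℝ 1 h := hh.of_le (by exact_mod_cast le_top)
  have hD : Continuous (fderiv ℝ h) := h1.continuous_fderiv one_ne_zero
  have hd : Differentiable ℝ h := h1.differentiable one_ne_zero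
  -- radius
  obtain ⟨R, hR⟩ := hc.isCompact.isBounded.subset_ball (0 : ℂ)
  obtain ⟨M, hM0, hM⟩ : ∃ M : ℝ, 0 < M ∧ ∀ w : ℂ, M ≤ ‖w‖ → z - w ∉ tsupport h := by
    refine ⟨|R| + ‖z‖ + 1, by positivity, fun w hw hm => ?_⟩
    have h3 := hR hm
    rw [mem_ball_zero_iff] at h3
    have h4 : ‖w‖ ≤ ‖z‖ + ‖z - w‖ := by
      have := norm_sub_le z (z - w)
      simpa using this
    have := le_abs_self R
    linarith
  set e : ℝ → ℂ := fun θ => Complex.exp (θ * Complex.I) with he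
  have hee : ∀ θ : ℝ, (Real.cos θ + Real.sin θ * Complex.I : ℂ) = e θ := by
    intro θ; rw [he]; simp [Complex.exp_mul_I]
  have hen : ∀ θ, ‖e θ‖ = 1 := fun θ => Complex.norm_exp_ofReal_mul_I θ
  have hec : Continuous e := by fun_prop
  have hes : ∀ θ, e θ * (starRingEnd ℂ) (e θ) = 1 := by
    intro θ; rw [Complex.mul_conj, Complex.normSq_eq_norm_sq, hen]; simp
  set G1 : ℝ × ℝ → ℂ := fun p => fderiv ℝ h (z - p.1 * e p.2) (e p.2) with hG1
  set G2 : ℝ × ℝ → ℂ := fun p => fderiv ℝ h (z - p.1 * e p.2) (Complex.I * e p.2) with hG2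
  have cp : Continuous (fun p : ℝ × ℝ => z - p.1 * e p.2) := by fun_prop
  have cG1 : Continuous G1 := (hD.comp cp).clm_apply (by fun_prop)
  have cG2 : Continuous G2 := (hD.comp cp).clm_apply (by fun_prop)
  set S : Set (ℝ × ℝ) := Ioc 0 M ×ˢ Ioo (-Real.pi) Real.pi with hS
  have iS : ∀ G : ℝ × ℝ → ℂ, Continuous G → IntegrableOn G S := by
    intro G hG
    refine (hG.continuousOn.integrableOn_compact
      (isCompact_Icc.prod isCompact_Icc : IsCompact (Icc 0 M ×ˢ Icc (-Real.pi) Real.pi))).mono_set ?_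
    exact prod_mono Ioc_subset_Icc_self Ioo_subset_Icc_self
  have key : ∫ w : ℂ, w⁻¹ * dbar h (z - w) =
      ∫ p in S, (1 / 2 : ℂ) * (G1 p + Complex.I * G2 p) := by
    rw [← Complex.integral_comp_polarCoord_symm]
    have : ∀ p ∈ polarCoord.target,
        p.1 • ((Complex.polarCoord.symm p)⁻¹ * dbar h (z - Complex.polarCoord.symm p)) =
        (1 / 2 : ℂ) * (G1 p + Complex.I * G2 p) := by
      intro p hp
      have hp0 : (p.1 : ℂ) ≠ 0 := by
        have : (0 : ℝ) < p.1 := hp.1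
        exact_mod_cast this.ne'
      have hinv : (e p.2)⁻¹ = (starRingEnd ℂ) (e p.2) :=
        inv_eq_of_mul_eq_one_right (hes p.2)
      rw [Complex.polarCoord_symm_apply, hee, hG1, hG2]
      simp only
      rw [aux_lin, dbar, mul_inv, hinv, Complex.real_smul]
      field_simp
    rw [setIntegral_congr_fun polarCoord.open_target.measurableSet this]
    refine setIntegral_eq_of_subset_of_forall_sdiff_eq_zero
      polarCoord.open_target.measurableSet ?_ ?_
    · exact prod_mono Ioc_subset_Ioi_self subset_rfl
    · rintro ⟨r, θ⟩ ⟨hp, hnp⟩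
      have hr : 0 < r := hp.1
      have hrM : M ≤ r := by
        by_contra hlt
        push Not at hlt
        exact hnp ⟨⟨hr, hlt.le⟩, hp.2⟩
      have hz : z - r * e θ ∉ tsupport h := by
        apply hM
        rw [norm_mul, hen, Complex.norm_real, Real.norm_eq_abs, abs_of_pos hr, mul_one]
        exact hrM
      have : fderiv ℝ h (z - r * e θ) = 0 := by
        by_contra hne
        exact hz (tsupport_fderiv_subset ℝ (subset_tsupport _ hne))
      simp [hG1, hG2, this]
  have I1 : ∫ p in S, G1 p = 2 * Real.pi * h z := by
    have i1 := iS G1 cG1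
    rw [IntegrableOn, hS, Measure.volume_eq_prod, ← Measure.prod_restrict] at i1
    rw [hS, Measure.volume_eq_prod, ← Measure.prod_restrict, integral_prod_symm _ i1]
    have : ∀ θ : ℝ, ∫ r in Ioc 0 M, G1 (r, θ) = h z := by
      intro θ
      rw [← intervalIntegral.integral_of_le hM0.le]
      have hder : ∀ r ∈ uIcc 0 M, HasDerivAt (fun r : ℝ => - h (z - r * e θ)) (G1 (r, θ)) r := by
        intro r _
        have ha : HasDerivAt (fun r : ℝ => z - r * e θ) (-(e θ)) r := by
          simpa using ((Complex.ofRealCLM.hasDerivAt (x := r)).mul_const (e θ)).const_sub z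
        have hb := ((hd (z - r * e θ)).hasFDerivAt.comp_hasDerivAt r ha).neg
        rw [map_neg, neg_neg] at hb
        exact hb
      rw [intervalIntegral.integral_eq_sub_of_hasDerivAt hder
        ((cG1.comp (by fun_prop : Continuous fun r : ℝ => (r, θ))).intervalIntegrable _ _)]
      have : h (z - M * e θ) = 0 := by
        apply image_eq_zero_of_notMem_tsupport
        apply hM
        rw [norm_mul, hen, Complex.norm_real, Real.norm_eq_abs, abs_of_pos hM0, mul_one]
      simp [this]
    simp_rw [this]
    rw [setIntegral_const]
    rw [Real.volume_real_Ioo_of_le (by linarith [Real.pi_pos]), Complex.real_smul]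
    push_cast; ring
  have I2 : ∫ p in S, G2 p = 0 := by
    have i2 := iS G2 cG2
    rw [IntegrableOn, hS, Measure.volume_eq_prod, ← Measure.prod_restrict] at i2
    rw [hS, Measure.volume_eq_prod, ← Measure.prod_restrict, integral_prod _ i2]
    rw [setIntegral_congr_fun (g := fun _ => (0 : ℂ)) measurableSet_Ioc]
    · simp
    intro r hr
    have hr0 : (r : ℂ) ≠ 0 := by exact_mod_cast hr.1.ne'
    simp only
    rw [← integral_Ioc_eq_integral_Ioo, ← intervalIntegral.integral_of_le (by linarith [Real.pi_pos])]
    have hder : ∀ θ ∈ uIcc (-Real.pi) Real.pi,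
        HasDerivAt (fun θ : ℝ => h (z - r * e θ)) (-r * G2 (r, θ)) θ := by
      intro θ _
      have he' : HasDerivAt e (Complex.I * e θ) θ := by
        have := ((Complex.ofRealCLM.hasDerivAt (x := θ)).mul_const Complex.I).cexp
        simpa [he, mul_comm] using this
      have ha : HasDerivAt (fun θ : ℝ => z - r * e θ) (-(r * (Complex.I * e θ))) θ :=
        (he'.const_mul (r : ℂ)).const_sub z
      have hb := (hd (z - r * e θ)).hasFDerivAt.comp_hasDerivAt θ ha
      have hs : fderiv ℝ h (z - r * e θ) (-(r * (Complex.I * e θ))) = -r * G2 (r, θ) := by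
        have hl := (fderiv ℝ h (z - r * e θ)).map_smul r (Complex.I * e θ)
        rw [Complex.real_smul, Complex.real_smul] at hl
        rw [map_neg, hl, hG2]; ring
      rw [hs] at hb
      exact hb
    have hI := intervalIntegral.integral_eq_sub_of_hasDerivAt hder
      ((continuous_const.mul (cG2.comp (by fun_prop : Continuous fun θ : ℝ => (r, θ)))).intervalIntegrable _ _)
    have hper : e (-Real.pi) = e Real.pi := by
      simp [← hee]
    rw [hper, sub_self, intervalIntegral.integral_const_mul] at hI
    exact (mul_eq_zero.mp hI).resolve_left (neg_ne_zero.mpr hr0)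
  rw [aux_conv', key, integral_const_mul, integral_add (iS _ cG1) ((iS _ cG2).const_mul _),
    integral_const_mul, I1, I2]
  have : (Real.pi : ℂ) ≠ 0 := by exact_mod_cast Real.pi_ne_zero
  field_simp
  ring

/-- Lemma 2.2(ii): for a bounded open `W ⊆ ℂ` and a smooth `g` with compact support
contained in `W`, the Cauchy transform `Tg` vanishes outside some compact subset of `W`
if and only if `g = ∂̄h` for some smooth `h` with compact support contained in `W`. -/
theorem cauchyT_vanishes_iff_dbar_exact (W : Set ℂ) (hW : IsOpen W)
    (hWb : Bornology.IsBounded W) (g : ℂ → ℂ) (hg : ContDiff ℝ (⊤ : ℕ∞) g)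
    (hgc : IsCompact (tsupport g)) (hgW : tsupport g ⊆ W) :
    (∃ K : Set ℂ, IsCompact K ∧ K ⊆ W ∧ ∀ z ∉ K, cauchyT g z = 0) ↔
      (∃ h : ℂ → ℂ, ContDiff ℝ (⊤ : ℕ∞) h ∧ IsCompact (tsupport h) ∧ tsupport h ⊆ W ∧
        ∀ z : ℂ, dbar h z = g z) := by
  constructor
  · rintro ⟨K, hK, hKW, hz⟩
    have hsub : tsupport (cauchyT g) ⊆ K := by
      refine closure_minimal (fun z hne => ?_) hK.isClosed
      by_contra hzK
      exact hne (hz z hzK)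
    exact ⟨cauchyT g, aux_smooth g hg hgc, hK.of_isClosed_subset (isClosed_tsupport _) hsub,
      hsub.trans hKW, fun z => by rw [aux_dbar_T g hg hgc, aux_T_dbar g hg hgc]⟩
  · rintro ⟨h, hh, hc, hhW, hdb⟩
    refine ⟨tsupport h, hc, hhW, fun z hz => ?_⟩
    have : g = dbar h := funext fun z => (hdb z).symm
    rw [this, aux_T_dbar h hh hc]
    exact image_eq_zero_of_notMem_tsupport hz
end

section
/- (Lemma 2.4, first part, concrete form: the Cauchy transform of ⌈f⌉ recovers the germ of f.) Let K ⊆ ℂ be compact, let f : ℂ → ℂ be holomorphic on ℂ \ K with f(λ) → 0 as |λ| → ∞, and let ρ : ℂ → ℝ be smooth with compact support and identically 1 on a neighborhood of K. Let F be the function on ℂ equal to f(z)·(∂̄ρ)(z) for z ∈ ℂ \ K and to 0 on K (a smooth compactly supported function). Then for every λ ∈ ℂ \ K one has (TF)(λ) = (ρ(λ) − 1)·f(λ). In particular TF = −f on the complement of tsupport ρ. -/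
open MeasureTheory

lemma aux_cont (h : ℂ → ℂ) (hh : ContDiff ℝ 1 h) : Continuous (dbar h) := by
  have := hh.continuous_fderiv (by norm_num)
  unfold dbar
  fun_prop

lemma aux_polar (L : ℂ →L[ℝ] ℂ) (θ : ℝ) :
    Complex.exp (-(θ * Complex.I)) * ((1 / 2) * (L 1 + Complex.I * L Complex.I)) =
      (1 / 2) * (L (Complex.exp (θ * Complex.I)) +
        Complex.I * L (Complex.I * Complex.exp (θ * Complex.I))) := by
  have h1 : Complex.exp (θ * Complex.I) =
      (Real.cos θ) • (1 : ℂ) + (Real.sin θ) • Complex.I := by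
    rw [Complex.exp_mul_I]; simp
  have h2 : Complex.I * Complex.exp (θ * Complex.I) =
      (-Real.sin θ) • (1 : ℂ) + (Real.cos θ) • Complex.I := by
    rw [Complex.exp_mul_I]; simp; ring_nf; simp; ring
  have h3 : Complex.exp (-(θ * Complex.I)) =
      (Real.cos θ : ℂ) - (Real.sin θ : ℂ) * Complex.I := by
    rw [← neg_mul, Complex.exp_mul_I]; simp; ring
  rw [h2, h1, h3, map_add, map_add, map_smul, map_smul, map_smul, map_smul]
  simp only [Complex.real_smul]
  push_cast
  ring_nf
  simp only [Complex.I_sq]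
  ring

lemma aux_swap (G : ℝ → ℝ → ℂ) (hG : Continuous (Function.uncurry G)) (a b c d : ℝ) :
    ∫ x in a..b, ∫ y in c..d, G x y = ∫ y in c..d, ∫ x in a..b, G x y := by
  apply intervalIntegral_intervalIntegral_swap
  apply IntegrableOn.mono_set (t := Set.uIcc a b ×ˢ Set.uIcc c d)
  · exact hG.continuousOn.integrableOn_compact (isCompact_uIcc.prod isCompact_uIcc)
  · exact Set.prod_mono Set.uIoc_subset_uIcc Set.uIoc_subset_uIcc

lemma aux_ray (h : ℂ → ℂ) (hh : ContDiff ℝ 1 h) (z e : ℂ) (R : ℝ) :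
    ∫ r in (0 : ℝ)..R, fderiv ℝ h (z + r * e) e = h (z + R * e) - h z := by
  have hc := hh.continuous_fderiv (by norm_num)
  have := intervalIntegral.integral_eq_sub_of_hasDerivAt (a := 0) (b := R)
    (f := fun r : ℝ => h (z + r * e)) (f' := fun r : ℝ => fderiv ℝ h (z + r * e) e) ?_ ?_
  · rw [this]; simp
  · intro r _
    have h1 : HasDerivAt (fun r : ℝ => z + r * e) e r := by
      simpa using ((Complex.ofRealCLM.hasDerivAt (x := r)).mul_const e).const_add z
    exact ((hh.differentiable (by norm_num)) _).hasFDerivAt.comp_hasDerivAt r h1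
  · apply Continuous.intervalIntegrable
    fun_prop

lemma aux_circ (h : ℂ → ℂ) (hh : ContDiff ℝ 1 h) (z : ℂ) (r : ℝ) (hr : r ≠ 0) :
    ∫ θ in (-Real.pi)..Real.pi, fderiv ℝ h (z + r * Complex.exp (θ * Complex.I))
      (Complex.I * Complex.exp (θ * Complex.I)) = 0 := by
  have hc := hh.continuous_fderiv (by norm_num)
  have := intervalIntegral.integral_eq_sub_of_hasDerivAt (a := -Real.pi) (b := Real.pi)
    (f := fun θ : ℝ => h (z + r * Complex.exp (θ * Complex.I)))
    (f' := fun θ : ℝ => r • fderiv ℝ h (z + r * Complex.exp (θ * Complex.I))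
      (Complex.I * Complex.exp (θ * Complex.I))) ?_ ?_
  · rw [intervalIntegral.integral_smul] at this
    have h0 : h (z + r * Complex.exp (((Real.pi : ℝ) : ℂ) * Complex.I)) -
        h (z + r * Complex.exp (((-Real.pi : ℝ) : ℂ) * Complex.I)) = 0 := by
      simp [Complex.exp_neg]
    rw [h0] at this
    exact (smul_eq_zero.mp this).resolve_left hr
  · intro θ _
    have h1 : HasDerivAt (fun θ : ℝ => z + r * Complex.exp (θ * Complex.I))
        (r * (Complex.exp (θ * Complex.I) * Complex.I)) θ := by
      have h2 : HasDerivAt (fun θ : ℝ => (θ : ℂ) * Complex.I) Complex.I θ := by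
        simpa using ((Complex.ofRealCLM.hasDerivAt (x := θ)).mul_const Complex.I)
      exact ((h2.cexp).const_mul (r : ℂ)).const_add z
    have h3 := ((hh.differentiable (by norm_num)) _).hasFDerivAt.comp_hasDerivAt θ h1
    refine h3.congr_deriv ?_
    symm
    rw [← map_smul, Complex.real_smul, mul_comm Complex.I]
  · apply Continuous.intervalIntegrable
    fun_prop

lemma aux_P1 (h : ℂ → ℂ) (hh : ContDiff ℝ 1 h) (z : ℂ) (R : ℝ) (hR : 0 ≤ R) :
    ∫ r in (0 : ℝ)..R, ∫ θ in (-Real.pi)..Real.pi,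
      Complex.exp (-(θ * Complex.I)) * dbar h (z + r * Complex.exp (θ * Complex.I)) =
    (1 / 2) * ((∫ θ in (-Real.pi)..Real.pi, h (z + R * Complex.exp (θ * Complex.I))) -
      2 * Real.pi * h z) := by
  have hc := hh.continuous_fderiv (by norm_num)
  have hcont := hh.continuous
  have e1 : ∀ r ∈ Set.Ioc 0 R, ∫ θ in (-Real.pi)..Real.pi,
      Complex.exp (-(θ * Complex.I)) * dbar h (z + r * Complex.exp (θ * Complex.I)) =
      (1 / 2) * ∫ θ in (-Real.pi)..Real.pi, fderiv ℝ h (z + r * Complex.exp (θ * Complex.I))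
        (Complex.exp (θ * Complex.I)) := by
    intro r hr
    simp only [dbar, aux_polar]
    rw [intervalIntegral.integral_const_mul, intervalIntegral.integral_add,
      intervalIntegral.integral_const_mul, aux_circ h hh z r hr.1.ne']
    · simp
    · apply Continuous.intervalIntegrable; fun_prop
    · apply Continuous.intervalIntegrable; fun_prop
  rw [intervalIntegral.integral_of_le hR, setIntegral_congr_fun measurableSet_Ioc e1,
    ← intervalIntegral.integral_of_le hR, intervalIntegral.integral_const_mul,
    aux_swap _ (by unfold Function.uncurry; fun_prop)]
  simp only [aux_ray h hh]
  rw [intervalIntegral.integral_sub]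
  · simp; ring_nf; simp
  · apply Continuous.intervalIntegrable; fun_prop
  · simp

lemma aux_P2 (g : ℂ → ℂ) (hg : Continuous g) (hs : HasCompactSupport g) (z : ℂ) :
    ∃ R₀ : ℝ, ∀ R ≥ R₀, ∫ μ : ℂ, g μ / (z - μ) =
     - ∫ r in (0 : ℝ)..R, ∫ θ in (-Real.pi)..Real.pi,
      Complex.exp (-(θ * Complex.I)) * g (z + r * Complex.exp (θ * Complex.I)) := by
  obtain ⟨C, hC⟩ := hs.isCompact.isBounded.exists_norm_le
  refine ⟨max 0 (C + ‖z‖), fun R hR => ?_⟩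
  have hR0 : 0 ≤ R := (le_max_left _ _).trans hR
  have hRC : C + ‖z‖ ≤ R := (le_max_right _ _).trans hR
  set G : ℝ × ℝ → ℂ := fun p =>
    Complex.exp (-(p.2 * Complex.I)) * g (z + p.1 * Complex.exp (p.2 * Complex.I)) with hG
  have hGc : Continuous G := by fun_prop
  have hG0 : ∀ p : ℝ × ℝ, R < p.1 → G p = 0 := by
    intro p hp
    have : g (z + p.1 * Complex.exp (p.2 * Complex.I)) = 0 := by
      by_contra hne
      have h1 := hC _ (subset_tsupport g hne)
      have h2 : ‖(p.1 : ℂ) * Complex.exp (p.2 * Complex.I)‖ = p.1 := by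
        rw [norm_mul, Complex.norm_exp_ofReal_mul_I, mul_one, Complex.norm_real,
          Real.norm_of_nonneg (by linarith)]
      have h3 := norm_sub_le (z + p.1 * Complex.exp (p.2 * Complex.I)) z
      rw [add_sub_cancel_left, h2] at h3
      linarith
    simp [hG, this]
  have hint : IntegrableOn G (Set.Ioc 0 R ×ˢ Set.Ioo (-Real.pi) Real.pi) := by
    apply IntegrableOn.mono_set (t := Set.Icc 0 R ×ˢ Set.Icc (-Real.pi) Real.pi)
    · exact hGc.continuousOn.integrableOn_compact (isCompact_Icc.prod isCompact_Icc)
    · exact Set.prod_mono Set.Ioc_subset_Icc_self Set.Ioo_subset_Icc_self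
  calc ∫ μ : ℂ, g μ / (z - μ) = ∫ w : ℂ, g (z + w) / (z - (z + w)) :=
        (integral_add_left_eq_self (fun μ => g μ / (z - μ)) z).symm
    _ = ∫ p in Set.Ioi (0 : ℝ) ×ˢ Set.Ioo (-Real.pi) Real.pi, - G p := by
        rw [← Complex.integral_comp_polarCoord_symm]
        apply setIntegral_congr_fun (measurableSet_Ioi.prod measurableSet_Ioo)
        rintro ⟨r, θ⟩ ⟨hr, -⟩
        have hr' : (r : ℂ) ≠ 0 := by exact_mod_cast (ne_of_gt hr)
        have he : Complex.exp (θ * Complex.I) ≠ 0 := Complex.exp_ne_zero _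
        simp only [Complex.polarCoord_symm_apply, hG, Complex.real_smul, Complex.ofReal_cos,
          Complex.ofReal_sin, ← Complex.exp_mul_I, Complex.exp_neg]
        field_simp
        simp
        field_simp
    _ = - ∫ p in Set.Ioi (0 : ℝ) ×ˢ Set.Ioo (-Real.pi) Real.pi, G p := integral_neg _
    _ = - ∫ p in Set.Ioc 0 R ×ˢ Set.Ioo (-Real.pi) Real.pi, G p := by
        congr 1
        apply setIntegral_eq_of_subset_of_forall_sdiff_eq_zero
          (measurableSet_Ioi.prod measurableSet_Ioo)
        · exact Set.prod_mono Set.Ioc_subset_Ioi_self le_rfl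
        · rintro ⟨r, θ⟩ ⟨⟨h1, h2⟩, h3⟩
          apply hG0
          by_contra hcon
          exact h3 ⟨⟨h1, not_lt.mp hcon⟩, h2⟩
    _ = _ := by
        rw [Measure.volume_eq_prod, setIntegral_prod _ (by rwa [← Measure.volume_eq_prod]),
          intervalIntegral.integral_of_le hR0]
        simp only [intervalIntegral.integral_of_le (neg_le_self Real.pi_pos.le),
          integral_Ioc_eq_integral_Ioo, hG]

lemma aux_circ_lim (h : ℂ → ℂ)
    (h0 : Filter.Tendsto h (Bornology.cobounded ℂ) (nhds 0)) (z : ℂ) :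
    Filter.Tendsto (fun R : ℝ => ∫ θ in (-Real.pi)..Real.pi,
      h (z + R * Complex.exp (θ * Complex.I))) Filter.atTop (nhds 0) := by
  rw [Metric.tendsto_nhds]
  intro ε hε
  have hpi := Real.pi_pos
  have h1 : ∀ᶠ w in Bornology.cobounded ℂ, ‖h w‖ < ε / (4 * Real.pi) := by
    have := Metric.tendsto_nhds.mp h0 (ε / (4 * Real.pi)) (by positivity)
    simpa using this
  rw [← comap_norm_atTop, Filter.eventually_comap] at h1
  obtain ⟨C, hC⟩ := Filter.eventually_atTop.mp h1
  filter_upwards [Filter.eventually_ge_atTop (max 0 (C + ‖z‖))] with R hR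
  have hR0 : 0 ≤ R := (le_max_left _ _).trans hR
  have hRC : C + ‖z‖ ≤ R := (le_max_right _ _).trans hR
  rw [dist_zero_right]
  have := intervalIntegral.norm_integral_le_of_norm_le_const (a := -Real.pi) (b := Real.pi)
    (f := fun θ : ℝ => h (z + R * Complex.exp (θ * Complex.I))) (C := ε / (4 * Real.pi)) ?_
  · refine this.trans_lt ?_
    rw [abs_of_pos (by linarith)]
    have : ε / (4 * Real.pi) * (Real.pi - -Real.pi) = ε / 2 := by field_simp; ring
    linarith
  · intro θ _
    apply le_of_lt
    refine hC _ ?_ _ rfl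
    have h2 : ‖(R : ℂ) * Complex.exp (θ * Complex.I)‖ = R := by
      rw [norm_mul, Complex.norm_exp_ofReal_mul_I, mul_one, Complex.norm_real,
        Real.norm_of_nonneg hR0]
    have h3 := norm_sub_le (z + R * Complex.exp (θ * Complex.I)) z
    rw [add_sub_cancel_left, h2] at h3
    linarith

lemma aux_pompeiu (h : ℂ → ℂ) (hh : ContDiff ℝ 1 h)
    (h0 : Filter.Tendsto h (Bornology.cobounded ℂ) (nhds 0))
    (hs : HasCompactSupport (dbar h)) (z : ℂ) : cauchyT (dbar h) z = h z := by
  obtain ⟨R₀, hR₀⟩ := aux_P2 (dbar h) (aux_cont h hh) hs z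
  have hlim := ((((aux_circ_lim h h0 z).sub_const (2 * Real.pi * h z)).const_mul (1 / 2)).neg)
  have hc : Filter.Tendsto (fun _ : ℝ => ∫ μ : ℂ, dbar h μ / (z - μ)) Filter.atTop
      (nhds (∫ μ : ℂ, dbar h μ / (z - μ))) := tendsto_const_nhds
  have heq := tendsto_nhds_unique (hc.congr' ?_) hlim
  · have : (Real.pi : ℂ) ≠ 0 := by exact_mod_cast Real.pi_ne_zero
    rw [cauchyT, heq]
    field_simp
    ring
  · filter_upwards [Filter.eventually_ge_atTop (max 0 R₀)] with R hR
    rw [hR₀ R ((le_max_right _ _).trans hR), aux_P1 h hh z R ((le_max_left _ _).trans hR)]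

lemma aux_dbar_congr {f g : ℂ → ℂ} {z : ℂ} (h : f =ᶠ[nhds z] g) : dbar f z = dbar g z := by
  simp only [dbar, h.fderiv_eq]

lemma aux_dbar_const (c z : ℂ) : dbar (fun _ => c) z = 0 := by
  simp [dbar]

lemma aux_dbar_mul (f ρ : ℂ → ℂ) (z : ℂ) (hf : DifferentiableAt ℂ f z)
    (hρ : DifferentiableAt ℝ ρ z) :
    dbar (fun w => (ρ w - 1) * f w) z = f z * dbar ρ z := by
  have h1 := hf.hasDerivAt.hasFDerivAt.restrictScalars ℝ
  have h2 := (hρ.hasFDerivAt.sub_const 1).mul h1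
  have h3 : fderiv ℝ (fun w => (ρ w - 1) * f w) z = _ := h2.fderiv
  rw [dbar, dbar, h3]
  simp
  ring_nf
  simp

/-- Lemma 2.4, first part (concrete form): for `f` holomorphic off a compact `K` and
vanishing at infinity, and `ρ` a smooth compactly supported bump equal to `1` near `K`,
the Cauchy transform of `F = f·∂̄ρ` (extended by `0` on `K`) satisfies
`(TF)(z) = (ρ(z) − 1)·f(z)` for all `z ∉ K`; in particular `TF = −f` off `tsupport ρ`. -/
theorem cauchyT_of_bump_form (K : Set ℂ) (hK : IsCompact K)
    (f : ℂ → ℂ) (hf : DifferentiableOn ℂ f Kᶜ)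
    (hf0 : Filter.Tendsto f (Bornology.cobounded ℂ) (nhds 0))
    (ρ : ℂ → ℝ) (hρ : ContDiff ℝ (⊤ : ℕ∞) ρ) (hρs : HasCompactSupport ρ)
    (hρ1 : ∃ V : Set ℂ, IsOpen V ∧ K ⊆ V ∧ ∀ z ∈ V, ρ z = 1)
    (F : ℂ → ℂ)
    (hF : ∀ z ∉ K, F z = f z * dbar (fun w => (ρ w : ℂ)) z)
    (hF0 : ∀ z ∈ K, F z = 0) :
    (∀ z ∉ K, cauchyT F z = ((ρ z : ℂ) - 1) * f z) ∧
      ∀ z ∉ tsupport ρ, cauchyT F z = -f z := by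
  classical
  obtain ⟨V, hV, hKV, hV1⟩ := hρ1
  have hKo : IsOpen Kᶜ := hK.isClosed.isOpen_compl
  have hKs : ∀ z ∉ tsupport ρ, z ∉ K := fun z hz hzK =>
    hz (subset_tsupport ρ (by simp [hV1 z (hKV hzK)]))
  have hρC : ContDiff ℝ 1 (fun w => (ρ w : ℂ)) :=
    Complex.ofRealCLM.contDiff.comp (hρ.of_le (by exact_mod_cast le_top))
  set h : ℂ → ℂ := fun w => ((ρ w : ℂ) - 1) * f w with hh
  have hnear : ∀ z ∈ K, h =ᶠ[nhds z] fun _ => 0 := by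
    intro z hz
    filter_upwards [hV.mem_nhds (hKV hz)] with w hw
    simp [hh, hV1 w hw]
  have hC1 : ContDiff ℝ 1 h := by
    rw [contDiff_iff_contDiffAt]
    intro z
    by_cases hz : z ∈ K
    · exact contDiffAt_const.congr_of_eventuallyEq (hnear z hz)
    · have h1 : ContDiffAt ℂ 1 f z :=
        (hf.analyticAt (hKo.mem_nhds hz)).contDiffAt
      exact (hρC.contDiffAt.sub contDiffAt_const).mul (h1.restrict_scalars ℝ)
  have hFh : dbar h = F := by
    funext z
    by_cases hz : z ∈ K
    · rw [hF0 z hz, aux_dbar_congr (hnear z hz), aux_dbar_const]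
    · rw [hF z hz]
      exact aux_dbar_mul f _ z (hf.differentiableAt (hKo.mem_nhds hz))
        (hρC.differentiable (by norm_num) z)
  have hFs : HasCompactSupport F := by
    refine HasCompactSupport.intro hρs.isCompact fun z hz => ?_
    rw [hF z (hKs z hz), aux_dbar_congr (g := fun _ => 0), aux_dbar_const, mul_zero]
    filter_upwards [(isClosed_tsupport ρ).isOpen_compl.mem_nhds hz] with w hw
    simp [image_eq_zero_of_notMem_tsupport hw]
  have hlim : Filter.Tendsto h (Bornology.cobounded ℂ) (nhds 0) := by
    have := hf0.neg
    rw [neg_zero] at this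
    refine this.congr' ?_
    filter_upwards [Bornology.isBounded_def.mp hρs.isCompact.isBounded] with w hw
    simp [hh, image_eq_zero_of_notMem_tsupport hw]
  have key : ∀ z, cauchyT F z = h z := fun z => by
    rw [← hFh]
    exact aux_pompeiu h hC1 hlim (by rwa [hFh]) z
  refine ⟨fun z _ => key z, fun z hz => ?_⟩
  rw [key z]
  simp [hh, image_eq_zero_of_notMem_tsupport hz]
end
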